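/- Let I₁, I₂ ⊆ ℝ be open intervals with base points s₁ ∈ I₁ and s₂ ∈ I₂, and let γ : I₁ → ℂ and ξ : I₂ → ℂ be continuously differentiable curves. Define h : I₁ × I₂ → ℝ by h(x,y) := −(1/2)(|γ(x)|² − |ξ(y)|²)(β_γ(x) − β_ξ(y)) + β̃_γ(x) + β̃_ξ(y). Then for all (x,y) ∈ I₁ × I₂: ∂h/∂x(x,y) = Im(conj(F̌₁(x,y))·∂F̌₁/∂x(x,y) + conj(F̌₂(x,y))·∂F̌₂/∂x(x,y)) and ∂h/∂y(x,y) = Im(conj(F̌₁(x,y))·∂F̌₁/∂y(x,y) + conj(F̌₂(x,y))·∂F̌₂/∂y(x,y)); that is, the pullback by F̌ of the Liouville form λ = Σ_j (1/2i)(z̄_j dz_j − z_j dz̄_j) on ℂ² equals dh, so the image of F̌ is an exact Lagrangian surface. -/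

import Mathlib

open Complex

/-- The primitive `β_γ` of the pullback of the Liouville form by a curve `γ`. -/
noncomputable def beta (γ γ' : ℝ → ℂ) (s₀ s : ℝ) : ℝ :=
  ∫ t in s₀..s, ((starRingEnd ℂ) (γ t) * γ' t).im

/-- The primitive `β̃_γ` of `|γ|²` times the pullback of the Liouville form by `γ`. -/
noncomputable def betaTilde (γ γ' : ℝ → ℂ) (s₀ s : ℝ) : ℝ :=
  ∫ t in s₀..s, ‖γ t‖ ^ 2 * ((starRingEnd ℂ) (γ t) * γ' t).im

/-- The Castro–Lerma profile surface `F̌ : I₁ × I₂ → ℂ²`. -/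
noncomputable def Fcheck (γ ξ γ' ξ' : ℝ → ℂ) (s₁ s₂ : ℝ) (x y : ℝ) : ℂ × ℂ :=
  (γ x * ξ y,
    ((1/2 * (‖ξ y‖ ^ 2 - ‖γ x‖ ^ 2) : ℝ) : ℂ)
      + Complex.I * ((beta ξ ξ' s₂ y - beta γ γ' s₁ x : ℝ) : ℂ))

/-- The primitive `h` of the pullback by `F̌` of the Liouville form on `ℂ²`. -/
noncomputable def hprim (γ ξ γ' ξ' : ℝ → ℂ) (s₁ s₂ : ℝ) (x y : ℝ) : ℝ :=
  -(1/2) * ((‖γ x‖ ^ 2 - ‖ξ y‖ ^ 2)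
      * (beta γ γ' s₁ x - beta ξ ξ' s₂ y))
    + betaTilde γ γ' s₁ x + betaTilde ξ ξ' s₂ y

/-! Write `z₂ = u + i v` for the second coordinate of `F̌`, so that the Liouville form contributes
`u dv - v du` there, while the first coordinate `γ ξ` contributes `|ξ|² dβ_γ` along `γ`. Adding the
two yields `1/2 (|γ|² + |ξ|²) dβ_γ - 1/2 (β_γ - β_ξ) d|γ|²`, which is the differential of `h` along
`γ`. Exchanging the two curves fixes `h` and composes `F̌` with `(z₁, z₂) ↦ (z₁, -z₂)`, under which
the Liouville form is invariant; hence the derivative along `ξ` follows from the one along `γ`. -/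

section

open scoped ComplexConjugate InnerProductSpace

/-- The Liouville form `λ = Σⱼ (1/2i)(z̄ⱼ dzⱼ - zⱼ dz̄ⱼ)` on `ℂ²` at the point `z`, applied to the
tangent vector `v`; each summand is written as the imaginary part of `z̄ⱼ dzⱼ`. -/
def liouvilleForm (z v : ℂ × ℂ) : ℝ :=
  (conj z.1 * v.1 + conj z.2 * v.2).im

theorem liouvilleForm_neg_snd (z v : ℂ × ℂ) :
    liouvilleForm (z.1, -z.2) (v.1, -v.2) = liouvilleForm z v := by
  simp only [liouvilleForm, map_neg, neg_mul_neg]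

theorem im_conj_mul_mul_mul_right (z z' w : ℂ) :
    (conj (z * w) * (z' * w)).im = ‖w‖ ^ 2 * (conj z * z').im := by
  have factor : conj (z * w) * (z' * w) = ((‖w‖ ^ 2 : ℝ) : ℂ) * (conj z * z') := by
    rw [ofReal_pow, ← conj_mul' w, map_mul]
    ring
  rw [factor, im_ofReal_mul]

theorem im_conj_ofReal_add_I_mul_mul (u v u' v' : ℝ) :
    (conj ((u : ℂ) + I * v) * ((u' : ℂ) + I * v')).im = u * v' - v * u' := by
  simp [sub_eq_add_neg]

theorem liouvilleForm_mul_ofReal_add_I_mul (z z' w : ℂ) (u v u' v' : ℝ) :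
    liouvilleForm (z * w, u + I * v) (z' * w, u' + I * v') =
      ‖w‖ ^ 2 * (conj z * z').im + (u * v' - v * u') := by
  rw [liouvilleForm, add_im, im_conj_mul_mul_mul_right, im_conj_ofReal_add_I_mul_mul]

theorem hasDerivAt_intervalIntegral_of_continuousOn {E : Type*} [NormedAddCommGroup E]
    [NormedSpace ℝ E] [CompleteSpace E] {f : ℝ → E} {J : Set ℝ} {s x : ℝ}
    (ho : IsOpen J) (hc : J.OrdConnected) (hs : s ∈ J) (hx : x ∈ J) (hf : ContinuousOn f J) :
    HasDerivAt (fun z => ∫ t in s..z, f t) (f x) x :=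
  intervalIntegral.integral_hasDerivAt_right
    (hf.mono (hc.uIcc_subset hs hx)).intervalIntegrable
    (hf.stronglyMeasurableAtFilter ho x hx) (hf.continuousAt (ho.mem_nhds hx))

theorem Fcheck_swap (γ ξ γ' ξ' : ℝ → ℂ) (s₁ s₂ x y : ℝ) :
    Fcheck ξ γ ξ' γ' s₂ s₁ y x =
      ((Fcheck γ ξ γ' ξ' s₁ s₂ x y).1, -(Fcheck γ ξ γ' ξ' s₁ s₂ x y).2) := by
  ext1
  · exact mul_comm _ _
  · simp only [Fcheck]
    push_cast
    ring

theorem hprim_swap (γ ξ γ' ξ' : ℝ → ℂ) (s₁ s₂ x y : ℝ) :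
    hprim ξ γ ξ' γ' s₂ s₁ y x = hprim γ ξ γ' ξ' s₁ s₂ x y := by
  simp only [hprim]
  ring

variable {γ γ' : ℝ → ℂ} {J : Set ℝ} {s x : ℝ}

theorem continuousOn_im_conj_mul (hγ : ContinuousOn γ J) (hγ' : ContinuousOn γ' J) :
    ContinuousOn (fun t => (conj (γ t) * γ' t).im) J :=
  continuous_im.comp_continuousOn ((continuous_conj.comp_continuousOn hγ).mul hγ')

theorem hasDerivAt_beta (ho : IsOpen J) (hc : J.OrdConnected) (hs : s ∈ J) (hx : x ∈ J)
    (hγ : ContinuousOn γ J) (hγ' : ContinuousOn γ' J) :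
    HasDerivAt (beta γ γ' s) (conj (γ x) * γ' x).im x :=
  hasDerivAt_intervalIntegral_of_continuousOn ho hc hs hx (continuousOn_im_conj_mul hγ hγ')

theorem hasDerivAt_betaTilde (ho : IsOpen J) (hc : J.OrdConnected) (hs : s ∈ J) (hx : x ∈ J)
    (hγ : ContinuousOn γ J) (hγ' : ContinuousOn γ' J) :
    HasDerivAt (betaTilde γ γ' s) (‖γ x‖ ^ 2 * (conj (γ x) * γ' x).im) x :=
  hasDerivAt_intervalIntegral_of_continuousOn ho hc hs hx
    ((hγ.norm.pow 2).mul (continuousOn_im_conj_mul hγ hγ'))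

theorem hasDerivAt_Fcheck_left (ξ ξ' : ℝ → ℂ) (s₂ y : ℝ) (hγ : HasDerivAt γ (γ' x) x)
    (hβ : HasDerivAt (beta γ γ' s) (conj (γ x) * γ' x).im x) :
    HasDerivAt (fun x' => Fcheck γ ξ γ' ξ' s s₂ x' y)
      (γ' x * ξ y, ((-⟪γ x, γ' x⟫_ℝ : ℝ) : ℂ) + I * ((-(conj (γ x) * γ' x).im : ℝ) : ℂ)) x := by
  have hu : HasDerivAt (fun x' => 1/2 * (‖ξ y‖ ^ 2 - ‖γ x'‖ ^ 2)) (-⟪γ x, γ' x⟫_ℝ) x :=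
    ((hγ.norm_sq.const_sub (‖ξ y‖ ^ 2)).const_mul (1/2)).congr_deriv (by ring)
  have hv := hβ.const_sub (beta ξ ξ' s₂ y)
  exact (hγ.mul_const (ξ y)).prodMk (hu.ofReal_comp.add (hv.ofReal_comp.const_mul I))

theorem hasDerivAt_hprim_left (ξ ξ' : ℝ → ℂ) (s₂ y : ℝ) (hγ : HasDerivAt γ (γ' x) x)
    (hβ : HasDerivAt (beta γ γ' s) (conj (γ x) * γ' x).im x)
    (hβt : HasDerivAt (betaTilde γ γ' s) (‖γ x‖ ^ 2 * (conj (γ x) * γ' x).im) x) :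
    HasDerivAt (fun x' => hprim γ ξ γ' ξ' s s₂ x' y)
      (1/2 * (‖γ x‖ ^ 2 + ‖ξ y‖ ^ 2) * (conj (γ x) * γ' x).im
        - (beta γ γ' s x - beta ξ ξ' s₂ y) * ⟪γ x, γ' x⟫_ℝ) x := by
  have hprod := (hγ.norm_sq.sub_const (‖ξ y‖ ^ 2)).mul (hβ.sub_const (beta ξ ξ' s₂ y))
  exact (((hprod.const_mul (-(1/2))).add hβt).add_const (betaTilde ξ ξ' s₂ y)).congr_deriv
    (by ring)

theorem hasDerivAt_hprim_liouvilleForm_left (ξ ξ' : ℝ → ℂ) (s₂ y : ℝ) {D : ℂ × ℂ} (ho : IsOpen J)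
    (hc : J.OrdConnected) (hs : s ∈ J) (hx : x ∈ J) (hγ : ∀ t ∈ J, HasDerivAt γ (γ' t) t)
    (hγ' : ContinuousOn γ' J) (hD : HasDerivAt (fun x' => Fcheck γ ξ γ' ξ' s s₂ x' y) D x) :
    HasDerivAt (fun x' => hprim γ ξ γ' ξ' s s₂ x' y)
      (liouvilleForm (Fcheck γ ξ γ' ξ' s s₂ x y) D) x := by
  have hγc : ContinuousOn γ J := HasDerivAt.continuousOn hγ
  have hβ := hasDerivAt_beta ho hc hs hx hγc hγ'
  have hβt := hasDerivAt_betaTilde ho hc hs hx hγc hγ'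
  rw [hD.unique (hasDerivAt_Fcheck_left ξ ξ' s₂ y (hγ x hx) hβ)]
  refine (hasDerivAt_hprim_left ξ ξ' s₂ y (hγ x hx) hβ hβt).congr_deriv ?_
  rw [Fcheck, liouvilleForm_mul_ofReal_add_I_mul]
  ring

theorem hasDerivAt_hprim_liouvilleForm_right (γ γ' : ℝ → ℂ) (s₁ x : ℝ) {ξ ξ' : ℝ → ℂ} {s₂ y : ℝ}
    {D : ℂ × ℂ} (ho : IsOpen J) (hc : J.OrdConnected) (hs : s₂ ∈ J) (hy : y ∈ J)
    (hξ : ∀ t ∈ J, HasDerivAt ξ (ξ' t) t) (hξ' : ContinuousOn ξ' J)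
    (hD : HasDerivAt (fun y' => Fcheck γ ξ γ' ξ' s₁ s₂ x y') D y) :
    HasDerivAt (fun y' => hprim γ ξ γ' ξ' s₁ s₂ x y')
      (liouvilleForm (Fcheck γ ξ γ' ξ' s₁ s₂ x y) D) y := by
  have hD_swap : HasDerivAt (fun y' => Fcheck ξ γ ξ' γ' s₂ s₁ y' x) (D.1, -D.2) y := by
    simp only [Fcheck_swap γ ξ γ' ξ' s₁ s₂ x]
    exact (hasFDerivAt_fst.comp_hasDerivAt y hD).prodMk
      (hasFDerivAt_snd.comp_hasDerivAt y hD).neg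
  simpa only [hprim_swap γ ξ γ' ξ' s₁ s₂ x, Fcheck_swap γ ξ γ' ξ' s₁ s₂ x,
    liouvilleForm_neg_snd] using
    hasDerivAt_hprim_liouvilleForm_left γ γ' s₁ x ho hc hs hy hξ hξ' hD_swap

end

/-- The pullback by `F̌` of the Liouville form
`λ = Σⱼ (1/2i)(z̄ⱼ dzⱼ − zⱼ dz̄ⱼ)` on `ℂ²` equals `dh`: the partial derivatives of `h`
are `Im(conj(F̌₁)·∂F̌₁ + conj(F̌₂)·∂F̌₂)` in each direction, so the image of `F̌` is an
exact Lagrangian surface. -/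
theorem exactness_of_ansatz
    (I₁ I₂ : Set ℝ) (hI₁o : IsOpen I₁) (hI₂o : IsOpen I₂)
    (hI₁c : I₁.OrdConnected) (hI₂c : I₂.OrdConnected)
    (s₁ s₂ : ℝ) (hs₁ : s₁ ∈ I₁) (hs₂ : s₂ ∈ I₂)
    (γ ξ γ' ξ' : ℝ → ℂ)
    (hγ : ∀ x ∈ I₁, HasDerivAt γ (γ' x) x)
    (hξ : ∀ y ∈ I₂, HasDerivAt ξ (ξ' y) y)
    (hγ'c : ContinuousOn γ' I₁) (hξ'c : ContinuousOn ξ' I₂)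
    (x y : ℝ) (hx : x ∈ I₁) (hy : y ∈ I₂)
    (Dx Dy : ℂ × ℂ)
    (hDx : HasDerivAt (fun x' => Fcheck γ ξ γ' ξ' s₁ s₂ x' y) Dx x)
    (hDy : HasDerivAt (fun y' => Fcheck γ ξ γ' ξ' s₁ s₂ x y') Dy y) :
    HasDerivAt (fun x' => hprim γ ξ γ' ξ' s₁ s₂ x' y)
      (((starRingEnd ℂ) (Fcheck γ ξ γ' ξ' s₁ s₂ x y).1 * Dx.1
        + (starRingEnd ℂ) (Fcheck γ ξ γ' ξ' s₁ s₂ x y).2 * Dx.2).im) x ∧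
    HasDerivAt (fun y' => hprim γ ξ γ' ξ' s₁ s₂ x y')
      (((starRingEnd ℂ) (Fcheck γ ξ γ' ξ' s₁ s₂ x y).1 * Dy.1
        + (starRingEnd ℂ) (Fcheck γ ξ γ' ξ' s₁ s₂ x y).2 * Dy.2).im) y :=
  ⟨hasDerivAt_hprim_liouvilleForm_left ξ ξ' s₂ y hI₁o hI₁c hs₁ hx hγ hγ'c hDx,
    hasDerivAt_hprim_liouvilleForm_right γ γ' s₁ x hI₂o hI₂c hs₂ hy hξ hξ'c hDy⟩
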